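/- Let Q be a quiver. The k-linear map δ_or : Ch_or → Ch_or ⊗ Ch_or defined by δ_or((X,H)) = Σ_{c = (i,j) ∈ H} −ω(a_i, a_j) (X_{c,1} ⊗ X_{c,2} − X_{c,2} ⊗ X_{c,1}) is a Lie cobracket, so (Ch_or, δ_or) is a Lie coalgebra. -/

import Mathlib

/-!
Statement 14: for a quiver `Q`, the chord algebra `Ch_or` (the free `k`-module with
basis the necklace chord diagrams `(X,H)`, `X` a necklace in the double quiver `Q̄` and
`H` a cut of `X`), equipped with
`δ_or((X,H)) = Σ_{c=(i,j)∈H} −ω(a_i,a_j)(X_{c,1} ⊗ X_{c,2} − X_{c,2} ⊗ X_{c,1})`,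
is a Lie coalgebra.
-/

open TensorProduct

noncomputable section

section LieCoalg

variable (k : Type*) [CommRing k] (g : Type*) [AddCommGroup g] [Module k g]

/-- `τ_{(12)}` on `g ⊗ g`. -/
def tau2 : g ⊗[k] g →ₗ[k] g ⊗[k] g := (TensorProduct.comm k g g).toLinearMap

/-- `τ_{(132)}` on the triple tensor product `g ⊗ (g ⊗ g)`: `x⊗y⊗z ↦ y⊗z⊗x`. -/
def tau132 : g ⊗[k] (g ⊗[k] g) →ₗ[k] g ⊗[k] (g ⊗[k] g) :=
  (TensorProduct.assoc k g g g).toLinearMap ∘ₗ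
    (TensorProduct.comm k g (g ⊗[k] g)).toLinearMap

/-- `τ_{(123)}` on the triple tensor product: `x⊗y⊗z ↦ z⊗x⊗y`. -/
def tau123 : g ⊗[k] (g ⊗[k] g) →ₗ[k] g ⊗[k] (g ⊗[k] g) :=
  tau132 k g ∘ₗ tau132 k g

variable {k g}

/-- `(δ ⊗ Id) ∘ δ : g → g ⊗ g ⊗ g` (triple tensor product associated as `g ⊗ (g ⊗ g)`). -/
def leftIter (δ : g →ₗ[k] g ⊗[k] g) : g →ₗ[k] g ⊗[k] (g ⊗[k] g) :=
  ((TensorProduct.assoc k g g g).toLinearMap ∘ₗ LinearMap.rTensor g δ) ∘ₗ δ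

/-- `δ : g → g ⊗ g` is a Lie cobracket if `τ_{(12)} ∘ δ = −δ` and
`(Id + τ_{(123)} + τ_{(132)}) ∘ (δ ⊗ Id) ∘ δ = 0` (co-Jacobi identity). -/
def IsLieCobracket (δ : g →ₗ[k] g ⊗[k] g) : Prop :=
  (tau2 k g) ∘ₗ δ = -δ ∧
  (LinearMap.id + tau123 k g + tau132 k g) ∘ₗ leftIter δ = 0

end LieCoalg

/-! ### Quivers, double quivers and paths

A quiver `Q` is given by a vertex type `I`, an arrow type `E`, and source/target maps
`s t : E → I`. -/

/-- The arrows of the double quiver `Q̄ = Q ⊔ Q*`: `.inl e = e` and `.inr e = e*`. -/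
abbrev Arr (E : Type*) := E ⊕ E

/-- The involution `a ↦ a*` on arrows of the double quiver (with `(e*)* = e`). -/
def astar {E : Type*} : Arr E → Arr E
  | .inl e => .inr e
  | .inr e => .inl e

/-- The source `a_s` of an arrow of the double quiver. -/
def asrc {I E : Type*} (s t : E → I) : Arr E → I
  | .inl e => s e
  | .inr e => t e

/-- The target `a_t` of an arrow of the double quiver. -/
def atgt {I E : Type*} (s t : E → I) : Arr E → I
  | .inl e => t e
  | .inr e => s e

open scoped Classical in
/-- The pairing `ω`: `ω(e,e*) = 1`, `ω(e*,e) = −1` for `e ∈ Q`, and `ω(a,b) = 0`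
whenever `b ≠ a*`. -/
def omg (k : Type*) [CommRing k] {E : Type*} : Arr E → Arr E → k
  | .inl e, .inr e' => if e = e' then 1 else 0
  | .inr e, .inl e' => if e = e' then -1 else 0
  | _, _ => 0

/-- `IsPathFrom s t v l`: `l` is a composable sequence of arrows starting at `v`. -/
def IsPathFrom {I E : Type*} (s t : E → I) : I → List (Arr E) → Prop
  | _, [] => True
  | v, a :: l => asrc s t a = v ∧ IsPathFrom s t (atgt s t a) l

/-- The target of a path. -/
def pathTgt {I E : Type*} (s t : E → I) : I → List (Arr E) → I
  | v, [] => v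
  | _, a :: l => pathTgt s t (atgt s t a) l

/-- A path in the double quiver `Q̄`. -/
structure QPath {I E : Type*} (s t : E → I) : Type _ where
  src : I
  arrows : List (Arr E)
  valid : IsPathFrom s t src arrows

/-! ### Cuts of paths -/

/-- A cut of a path with arrow list `l` (0-indexed): a set `H` of pairs `(i,j)` of
positions such that all the involved positions are distinct, `i < j` for each pair, the
pairs do not cross, and for each pair `{a_i, a_j} = {e, e*}` for some arrow `e ∈ Q`. -/
def IsCut {E : Type*} (l : List (Arr E)) (H : Finset (ℕ × ℕ)) : Prop :=
  (∀ c ∈ H, c.1 < c.2 ∧ c.2 < l.length ∧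
    ∃ e : E, (l[c.1]? = some (.inl e) ∧ l[c.2]? = some (.inr e)) ∨
             (l[c.1]? = some (.inr e) ∧ l[c.2]? = some (.inl e))) ∧
  (∀ c ∈ H, ∀ c' ∈ H, c ≠ c' →
    c.1 ≠ c'.1 ∧ c.1 ≠ c'.2 ∧ c.2 ≠ c'.1 ∧ c.2 ≠ c'.2) ∧
  ¬ ∃ c ∈ H, ∃ c' ∈ H, c.1 < c'.1 ∧ c'.1 < c.2 ∧ c.2 < c'.2

/-- No pair of a cut is nested inside another: together with `IsCut` this defines
simple cuts of paths. -/
def NoNest (H : Finset (ℕ × ℕ)) : Prop :=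
  ¬ ∃ c ∈ H, ∃ c' ∈ H, c.1 < c'.1 ∧ c'.2 < c.2

/-- A simple cut of a path: a cut in which no pair is nested inside another. -/
def IsSimpleCut {E : Type*} (l : List (Arr E)) (H : Finset (ℕ × ℕ)) : Prop :=
  IsCut l H ∧ NoNest H

/-- The sign `ε` contributed by one pair of a cut: `−ω(a_i, a_j)`. -/
def epsFactor (k : Type*) [CommRing k] {E : Type*} (l : List (Arr E)) (c : ℕ × ℕ) : k :=
  match l[c.1]?, l[c.2]? with
  | some a, some b => -(omg k a b)
  | _, _ => 0

/-- The sign `ε_H = ∏_ℓ (−ω(a_{i_ℓ}, a_{j_ℓ}))` of a cut. -/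
def epsH (k : Type*) [CommRing k] {E : Type*} (l : List (Arr E)) (H : Finset (ℕ × ℕ)) :
    k := ∏ c ∈ H, epsFactor k l c

/-- The chords of `H` lying strictly inside the chord `(i,j)`, reindexed along the path
`a_{i+1} ⋯ a_{j−1}`. -/
def insideCut (H : Finset (ℕ × ℕ)) (i j : ℕ) : Finset (ℕ × ℕ) :=
  (H.filter (fun c' => i < c'.1 ∧ c'.2 < j)).image
    (fun c' => (c'.1 - (i+1), c'.2 - (i+1)))

/-- The chords of `H` other than `(i,j)` not lying inside the chord `(i,j)`, reindexed
along the path `a₁ ⋯ a_{i−1} a_{j+1} ⋯ a_n`. -/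
def outsideCut (H : Finset (ℕ × ℕ)) (i j : ℕ) : Finset (ℕ × ℕ) :=
  ((H.erase (i, j)).filter (fun c' => ¬ (i < c'.1 ∧ c'.2 < j))).image
    (fun c' => (if j < c'.1 then c'.1 - (j - i + 1) else c'.1,
                if j < c'.2 then c'.2 - (j - i + 1) else c'.2))

/-- A closed path in the double quiver. -/
structure ClosedQPath {I E : Type*} (s t : E → I) : Type _ where
  path : QPath s t
  closed : pathTgt s t path.src path.arrows = path.src

/-- A closed path together with a cut (in a chosen linearization). -/
def NCDRaw {I E : Type*} (s t : E → I) : Type _ :=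
  {x : ClosedQPath s t × Finset (ℕ × ℕ) // IsCut x.1.path.arrows x.2}

/-- Simultaneous rotation of a closed path and of its cut: the equivalence closure of
this relation identifies exactly the data giving the same necklace chord diagram. -/
def RotRelC {I E : Type*} (s t : E → I) (p q : NCDRaw s t) : Prop :=
  ∃ (a : Arr E) (l : List (Arr E)),
    p.1.1.path.arrows = a :: l ∧ q.1.1.path.arrows = l ++ [a] ∧
    q.1.1.path.src = atgt s t a ∧
    q.1.2 = p.1.2.image (fun c => if c.1 = 0 then (c.2 - 1, l.length) else (c.1 - 1, c.2 - 1))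

/-- Necklace chord diagrams: a necklace (cyclic path) in `Q̄` together with a cut. -/
def NCD {I E : Type*} (s t : E → I) : Type _ := Quot (RotRelC s t)

variable (k : Type*) [CommRing k] {I E : Type*} (s t : E → I)

/-- The chord algebra `Ch_or`: the free `k`-module with basis the necklace chord
diagrams. -/
abbrev ChOr := NCD s t →₀ k

open scoped Classical in
/-- The basis vector of a necklace chord diagram, or `0` if the data is not a necklace
chord diagram. -/
def mkNCD (v : I) (l : List (Arr E)) (H : Finset (ℕ × ℕ)) : ChOr k s t :=
  if h : (IsPathFrom s t v l ∧ pathTgt s t v l = v) ∧ IsCut l H then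
    Finsupp.single (Quot.mk (RotRelC s t) ⟨(⟨⟨v, l, h.1.1⟩, h.1.2⟩, H), h.2⟩) (1 : k)
  else 0

/-- The chords of `H` outside the chord `(i,j)` of a cut of a necklace of length `n`,
reindexed along the cyclic path `(a_j)_t a_{j+1}⋯a_n a_1 ⋯ a_{i−1}`. -/
def outsideCutC (H : Finset (ℕ × ℕ)) (n i j : ℕ) : Finset (ℕ × ℕ) :=
  ((H.erase (i, j)).filter (fun c' => ¬ (i < c'.1 ∧ c'.2 < j))).image
    (fun c' =>
      let f : ℕ → ℕ := fun x => if j < x then x - (j + 1) else x + (n - 1 - j)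
      (min (f c'.1) (f c'.2), max (f c'.1) (f c'.2)))

/-- The summand of `δ_or` on `Ch_or` corresponding to the chord `c = (i,j)`:
`−ω(a_i,a_j) (X_{c,1} ⊗ X_{c,2} − X_{c,2} ⊗ X_{c,1})`, where `X_{c,1}` is the necklace
chord diagram on `[(a_i)_t a_{i+1}⋯a_{j−1}]` with the chords inside `c` and `X_{c,2}`
the one on `[(a_j)_t a_{j+1}⋯a_{i−1}]` with the chords outside `c`. -/
def chOrTerm (x : NCDRaw s t) (c : ℕ × ℕ) : ChOr k s t ⊗[k] ChOr k s t :=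
  let v := x.1.1.path.src
  let l := x.1.1.path.arrows
  let H := x.1.2
  match l[c.1]?, l[c.2]? with
  | some a, some b =>
      let X1 := mkNCD k s t (atgt s t a) ((l.drop (c.1+1)).take (c.2 - c.1 - 1))
        (insideCut H c.1 c.2)
      let X2 := mkNCD k s t (atgt s t b) (l.drop (c.2+1) ++ l.take c.1)
        (outsideCutC H l.length c.1 c.2)
      (-(omg k a b)) • (X1 ⊗ₜ[k] X2 - X2 ⊗ₜ[k] X1)
  | _, _ => (0 : k) • (mkNCD k s t v [] ∅ ⊗ₜ[k] mkNCD k s t v [] ∅)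

/-- The Lie cobracket `δ_or` on the chord algebra `Ch_or` (computed on a representative;
the result does not depend on the choice). -/
def deltaChOr : ChOr k s t →ₗ[k] ChOr k s t ⊗[k] ChOr k s t :=
  Finsupp.lift (ChOr k s t ⊗[k] ChOr k s t) k (NCD s t) fun q =>
    ∑ c ∈ q.out.1.2, chOrTerm k s t q.out c

section ListLemmas

open scoped List

variable {ι : Type*}

theorem List.Nodup.eq_of_append_cons_eq {A A' B B' : List ι} {j : ι}
    (hn : (A ++ j :: B).Nodup) (h : A ++ j :: B = A' ++ j :: B') : A = A' ∧ B = B' := by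
  induction A generalizing A' with
  | nil =>
    cases A' with
    | nil => simpa using h
    | cons a A' =>
      simp only [List.nil_append, List.cons_append, List.cons.injEq] at h
      simp [h.2] at hn
  | cons b A ih =>
    cases A' with
    | nil =>
      simp only [List.nil_append, List.cons_append, List.cons.injEq] at h
      simp [h.1] at hn
    | cons a A' =>
      simp only [List.cons_append, List.cons.injEq] at h
      have := ih (List.nodup_cons.1 hn).2 h.2
      exact ⟨by rw [h.1, this.1], this.2⟩

theorem List.IsRotated.eq_of_cons_nodup {l l' : List ι} {i : ι}
    (h : (i :: l) ~r (i :: l')) (hn : (i :: l).Nodup) : l = l' := by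
  obtain ⟨n, hlt, hr⟩ := List.isRotated_iff_mod.1 h
  rcases Nat.eq_zero_or_pos n with rfl | hpos
  · simpa using hr
  rcases hlt.lt_or_eq with hlt | rfl
  · rw [List.rotate_eq_drop_append_take hlt.le, List.drop_eq_getElem_cons hlt] at hr
    simp only [List.cons_append, List.cons.injEq] at hr
    have : n = 0 := (hn.getElem_inj_iff (hj := by simp)).1 (by simpa using hr.1)
    omega
  · rw [List.rotate_length] at hr
    simpa using hr

theorem List.isRotated_cons_append_cons (i j : ι) (A B : List ι) :
    (i :: (A ++ j :: B)) ~r (j :: (B ++ i :: A)) := by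
  simpa using (List.isRotated_append : (i :: A ++ j :: B) ~r (j :: B ++ i :: A))

theorem List.pair_sublist_iff {i j : ι} {L : List ι} :
    [i, j] <+ L ↔ ∃ u A B, L = u ++ i :: (A ++ j :: B) := by
  constructor
  · intro h
    obtain ⟨u, r, rfl, hi, hr⟩ := List.cons_sublist_iff.1 h
    obtain ⟨u₁, u₂, rfl⟩ := List.append_of_mem hi
    obtain ⟨r₁, r₂, rfl⟩ := List.append_of_mem (List.singleton_sublist.1 hr)
    exact ⟨u₁, u₂ ++ r₁, r₂, by simp⟩
  · rintro ⟨u, A, B, rfl⟩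
    refine List.Sublist.trans ?_ (List.sublist_append_right u _)
    exact List.Sublist.cons_cons i (List.singleton_sublist.2 (by simp))

theorem List.pair_sublist_or {i j : ι} {L : List ι} (hij : i ≠ j) (hi : i ∈ L) (hj : j ∈ L) :
    [i, j] <+ L ∨ [j, i] <+ L := by
  obtain ⟨u, B, rfl⟩ := List.append_of_mem hi
  rcases List.mem_append.1 hj with h | h
  · obtain ⟨u₁, u₂, rfl⟩ := List.append_of_mem h
    exact Or.inr (List.pair_sublist_iff.2 ⟨u₁, u₂, B, by simp⟩)
  · obtain ⟨u₁, u₂, rfl⟩ := List.append_of_mem ((List.mem_cons.1 h).resolve_left hij.symm)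
    exact Or.inl (List.pair_sublist_iff.2 ⟨u, u₁, u₂, by simp⟩)

theorem List.Nodup.not_pair_sublist_swap {i j : ι} {L : List ι} (hn : L.Nodup)
    (h : [i, j] <+ L) : ¬ [j, i] <+ L := by
  intro h'
  obtain ⟨u, A, B, rfl⟩ := List.pair_sublist_iff.1 h
  obtain ⟨u', A', B', e⟩ := List.pair_sublist_iff.1 h'
  have e' : u ++ i :: (A ++ j :: B) = (u' ++ j :: A') ++ i :: B' := by simpa using e
  obtain ⟨rfl, rfl⟩ := List.Nodup.eq_of_append_cons_eq hn e'
  simp [List.nodup_append, List.nodup_cons] at hn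

/-- Two distinct members of a list split its cyclic rotation class into two arcs. -/
theorem List.exists_isRotated_cons {i j : ι} {L : List ι} (hij : i ≠ j) (hi : i ∈ L)
    (hj : j ∈ L) : ∃ A B, L ~r (i :: (A ++ j :: B)) := by
  rcases List.pair_sublist_or hij hi hj with h | h
  · obtain ⟨u, A, B, rfl⟩ := List.pair_sublist_iff.1 h
    refine ⟨A, B ++ u, ?_⟩
    simpa using (List.isRotated_append : (u ++ (i :: (A ++ j :: B))) ~r _)
  · obtain ⟨u, A, B, rfl⟩ := List.pair_sublist_iff.1 h
    refine ⟨B ++ u, A, ?_⟩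
    simpa using (List.isRotated_append : ((u ++ j :: A) ++ (i :: B)) ~r _)

theorem List.exists_split_of_getElem? {L : List ι} {p q : ℕ} {i j : ι} (hpq : p < q)
    (hi : L[p]? = some i) (hj : L[q]? = some j) :
    ∃ u A B, L = u ++ i :: (A ++ j :: B) ∧ u.length = p ∧ q = u.length + 1 + A.length := by
  obtain ⟨hp, rfl⟩ := List.getElem?_eq_some_iff.1 hi
  obtain ⟨hq, rfl⟩ := List.getElem?_eq_some_iff.1 hj
  refine ⟨L.take p, (L.drop (p + 1)).take (q - (p + 1)), L.drop (q + 1), ?_, ?_, ?_⟩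
  · have h1 : L.drop q = L[q] :: L.drop (q + 1) := List.drop_eq_getElem_cons hq
    have h2 : (L.drop (p + 1)).take (q - (p + 1)) ++ L.drop q = L.drop (p + 1) := by
      have : L.drop q = (L.drop (p + 1)).drop (q - (p + 1)) := by
        rw [List.drop_drop]; congr 1; omega
      rw [this, List.take_append_drop]
    rw [← h1, h2, ← List.drop_eq_getElem_cons hp, List.take_append_drop]
  · simp; omega
  · simp; omega

theorem List.Nodup.idxOf_split [DecidableEq ι] {u A B : List ι} {i j : ι}
    (hn : (u ++ i :: (A ++ j :: B)).Nodup) :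
    (u ++ i :: (A ++ j :: B)).idxOf i = u.length ∧
      (u ++ i :: (A ++ j :: B)).idxOf j = u.length + 1 + A.length := by
  have hu := List.disjoint_of_nodup_append hn
  have hj : j ∉ i :: A := by
    have := (List.nodup_append.1 hn).2.1
    rw [← List.cons_append] at this
    exact fun h => List.disjoint_of_nodup_append this h (by simp)
  constructor
  · rw [List.idxOf_append_of_notMem fun h => hu h (by simp), List.idxOf_cons_self]
    rfl
  · rw [List.idxOf_append_of_notMem fun h => hu h (by simp), ← List.cons_append,
      List.idxOf_append_of_notMem hj, List.idxOf_cons_self, List.length_cons]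
    omega

/-- The arc strictly between `i` and `j` in the cyclic order of `L`. -/
def cyclicArc (L : List ι) (i j : ι) : List ι :=
  Classical.epsilon fun A => ∃ B, L ~r (i :: (A ++ j :: B))

theorem cyclicArc_eq {L A B : List ι} {i j : ι} (hn : L.Nodup)
    (h : L ~r (i :: (A ++ j :: B))) : cyclicArc L i j = A := by
  obtain ⟨B', h'⟩ : ∃ B', L ~r (i :: (cyclicArc L i j ++ j :: B')) :=
    Classical.epsilon_spec (p := fun A => ∃ B, L ~r (i :: (A ++ j :: B))) ⟨A, B, h⟩
  have hn' := h'.nodup_iff.1 hn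
  have e := (h'.symm.trans h).eq_of_cons_nodup hn'
  exact (List.Nodup.eq_of_append_cons_eq (List.nodup_cons.1 hn').2 e).1

theorem cyclicArc_congr {L L' : List ι} (h : L ~r L') (i j : ι) :
    cyclicArc L i j = cyclicArc L' i j := by
  have : ∀ X, L ~r X ↔ L' ~r X := fun X => ⟨h.symm.trans, h.trans⟩
  simp only [cyclicArc, this]

theorem isRotated_cyclicArc {L : List ι} {i j : ι} (hn : L.Nodup) (hij : i ≠ j) (hi : i ∈ L)
    (hj : j ∈ L) : L ~r (i :: (cyclicArc L i j ++ j :: cyclicArc L j i)) := by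
  obtain ⟨A, B, h⟩ := List.exists_isRotated_cons hij hi hj
  rw [cyclicArc_eq hn h, cyclicArc_eq hn (h.trans (List.isRotated_cons_append_cons i j A B))]
  exact h

end ListLemmas

section ChordLabelling

variable {ι : Type*} {R : ι → ι → Prop}

open scoped Classical in
/-- The pairs of positions of `L` whose entries are related by `R`. -/
def chordPairs (R : ι → ι → Prop) (L : List ι) : Finset (ℕ × ℕ) :=
  (Finset.range L.length ×ˢ Finset.range L.length).filter
    fun p => p.1 < p.2 ∧ ∃ i j, L[p.1]? = some i ∧ L[p.2]? = some j ∧ R i j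

theorem mem_chordPairs {L : List ι} {p q : ℕ} :
    (p, q) ∈ chordPairs R L ↔ p < q ∧ ∃ i j, L[p]? = some i ∧ L[q]? = some j ∧ R i j := by
  simp only [chordPairs, Finset.mem_filter, Finset.mem_product, Finset.mem_range]
  refine ⟨fun h => h.2, fun h => ⟨?_, h⟩⟩
  obtain ⟨-, i, j, hi, hj, -⟩ := h
  exact ⟨(List.getElem?_eq_some_iff.1 hi).1, (List.getElem?_eq_some_iff.1 hj).1⟩

theorem mem_chordPairs_lt {L : List ι} {p q : ℕ} (h : (p, q) ∈ chordPairs R L) :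
    p < q ∧ q < L.length := by
  obtain ⟨h, i, j, hi, hj, -⟩ := mem_chordPairs.1 h
  exact ⟨h, (List.getElem?_eq_some_iff.1 hj).1⟩

theorem chordPairs_rotate (hR : ∀ i j, R i j → R j i) (a : ι) (l : List ι) :
    chordPairs R (l ++ [a]) = (chordPairs R (a :: l)).image
      (fun c => if c.1 = 0 then (c.2 - 1, l.length) else (c.1 - 1, c.2 - 1)) := by
  ext ⟨p, q⟩
  simp only [Finset.mem_image, Prod.exists]
  constructor
  · intro h
    have hlt := mem_chordPairs_lt h
    obtain ⟨hpq, i, j, hi, hj, hr⟩ := mem_chordPairs.1 h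
    simp only [List.length_append, List.length_singleton] at hlt
    rw [List.getElem?_append_left (by omega)] at hi
    by_cases hq : q = l.length
    · subst hq
      simp only [List.getElem?_concat_length, Option.some.injEq] at hj
      subst hj
      exact ⟨0, p + 1, mem_chordPairs.2 ⟨by omega, a, i, by simp, by simpa using hi, hR _ _ hr⟩,
        by simp⟩
    · rw [List.getElem?_append_left (by omega)] at hj
      exact ⟨p + 1, q + 1, mem_chordPairs.2 ⟨by omega, i, j, by simpa using hi,
        by simpa using hj, hr⟩, by simp⟩
  · rintro ⟨p', q', h, e⟩
    have hlt := mem_chordPairs_lt h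
    obtain ⟨hpq, i, j, hi, hj, hr⟩ := mem_chordPairs.1 h
    simp only [List.length_cons] at hlt
    obtain ⟨q', rfl⟩ : ∃ m, q' = m + 1 := ⟨q' - 1, by omega⟩
    simp only [List.getElem?_cons_succ] at hj
    cases p' with
    | zero =>
      simp only [if_true, Nat.add_sub_cancel, Prod.mk.injEq] at e
      obtain ⟨rfl, rfl⟩ := e
      simp only [List.getElem?_cons_zero, Option.some.injEq] at hi
      subst hi
      refine mem_chordPairs.2 ⟨by omega, j, a, ?_, by simp, hR _ _ hr⟩
      rw [List.getElem?_append_left (by omega), hj]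
    | succ p' =>
      simp only [Nat.add_eq_zero_iff, one_ne_zero, and_false, if_false, Nat.add_sub_cancel,
        Prod.mk.injEq] at e
      obtain ⟨rfl, rfl⟩ := e
      simp only [List.getElem?_cons_succ] at hi
      refine mem_chordPairs.2 ⟨by omega, i, j, ?_, ?_, hr⟩
      · rw [List.getElem?_append_left (by omega), hi]
      · rw [List.getElem?_append_left (by omega), hj]

theorem getElem?_split_inside (u A B : List ι) (i j : ι) {p : ℕ} (hp : p < A.length) :
    (u ++ i :: (A ++ j :: B))[p + (u.length + 1)]? = A[p]? := by
  rw [List.getElem?_append_right (by omega),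
    show p + (u.length + 1) - u.length = p + 1 by omega, List.getElem?_cons_succ,
    List.getElem?_append_left hp]

theorem getElem?_split_right (u A B : List ι) (i j : ι) (p : ℕ) :
    (u ++ i :: (A ++ j :: B))[p + (u.length + 1 + A.length + 1)]? = B[p]? := by
  rw [List.getElem?_append_right (by omega),
    show p + (u.length + 1 + A.length + 1) - u.length = (p + A.length + 1) + 1 by omega,
    List.getElem?_cons_succ, List.getElem?_append_right (by omega),
    show p + A.length + 1 - A.length = p + 1 by omega, List.getElem?_cons_succ]

theorem insideCut_chordPairs (u A B : List ι) (i j : ι) :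
    insideCut (chordPairs R (u ++ i :: (A ++ j :: B))) u.length (u.length + 1 + A.length)
      = chordPairs R A := by
  ext ⟨p, q⟩
  simp only [insideCut, Finset.mem_image, Finset.mem_filter, Prod.exists, Prod.mk.injEq]
  constructor
  · rintro ⟨p', q', ⟨h, h1, h2⟩, rfl, rfl⟩
    obtain ⟨hpq, a, b, ha, hb, hr⟩ := mem_chordPairs.1 h
    obtain ⟨p, rfl⟩ : ∃ p, p' = p + (u.length + 1) := ⟨p' - (u.length + 1), by omega⟩
    obtain ⟨q, rfl⟩ : ∃ q, q' = q + (u.length + 1) := ⟨q' - (u.length + 1), by omega⟩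
    rw [getElem?_split_inside _ _ _ _ _ (by omega)] at ha hb
    simp only [Nat.add_sub_cancel]
    exact mem_chordPairs.2 ⟨by omega, a, b, ha, hb, hr⟩
  · intro h
    have hlt := mem_chordPairs_lt h
    obtain ⟨hpq, a, b, ha, hb, hr⟩ := mem_chordPairs.1 h
    refine ⟨p + (u.length + 1), q + (u.length + 1), ⟨mem_chordPairs.2 ⟨by omega, a, b, ?_, ?_, hr⟩,
      by omega, by omega⟩, by omega, by omega⟩
    · rwa [getElem?_split_inside _ _ _ _ _ (by omega)]
    · rwa [getElem?_split_inside _ _ _ _ _ (by omega)]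

theorem outsideCutC_chordPairs {E : Type*} {l : List (Arr E)} (hR : ∀ i j, R i j → R j i)
    (u A B : List ι) (i j : ι) (hij : R i j)
    (hcut : IsCut l (chordPairs R (u ++ i :: (A ++ j :: B)))) :
    outsideCutC (chordPairs R (u ++ i :: (A ++ j :: B))) (u ++ i :: (A ++ j :: B)).length
      u.length (u.length + 1 + A.length) = chordPairs R (B ++ u) := by
  have hmem : (u.length, u.length + 1 + A.length) ∈ chordPairs R (u ++ i :: (A ++ j :: B)) := by
    refine mem_chordPairs.2 ⟨by omega, i, j, by simp, ?_, hij⟩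
    rw [List.getElem?_append_right (by omega),
      show u.length + 1 + A.length - u.length = A.length + 1 by omega]
    simp
  have hlen : (u ++ i :: (A ++ j :: B)).length - 1 - (u.length + 1 + A.length) = B.length := by
    simp; omega
  have hlen' : (u ++ i :: (A ++ j :: B)).length = u.length + 1 + A.length + 1 + B.length := by
    simp; omega
  have hBu : (B ++ u).length = B.length + u.length := by simp
  have hleft : ∀ p, p < u.length → (u ++ i :: (A ++ j :: B))[p]? = u[p]? := fun p hp =>
    List.getElem?_append_left hp
  have hBl : ∀ p, p < B.length → (B ++ u)[p]? = B[p]? := fun p hp =>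
    List.getElem?_append_left hp
  have hBr : ∀ p, (B ++ u)[p + B.length]? = u[p]? := fun p => by
    rw [List.getElem?_append_right (by omega), Nat.add_sub_cancel]
  ext ⟨p, q⟩
  simp only [outsideCutC, Finset.mem_image, Finset.mem_filter, Finset.mem_erase, Prod.exists,
    Prod.mk.injEq, ne_eq, hlen]
  constructor
  · rintro ⟨p', q', ⟨⟨hne, h⟩, hni⟩, rfl, rfl⟩
    have hlt := mem_chordPairs_lt h
    obtain ⟨hpq, a, b, ha, hb, hr⟩ := mem_chordPairs.1 h
    have hd := hcut.2.1 _ hmem _ h (fun e => hne (by simpa using e.symm))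
    have hx1 : ¬ (u.length < p' ∧ p' < u.length + 1 + A.length ∧ u.length + 1 + A.length < q') :=
      fun hx => hcut.2.2 ⟨_, hmem, _, h, hx⟩
    have hx2 : ¬ (p' < u.length ∧ u.length < q' ∧ q' < u.length + 1 + A.length) :=
      fun hx => hcut.2.2 ⟨_, h, _, hmem, hx⟩
    dsimp only at hd
    by_cases hp : p' < u.length
    · by_cases hq : q' < u.length
      · rw [hleft _ (by omega)] at ha hb
        rw [if_neg (by omega), if_neg (by omega), min_eq_left (by omega), max_eq_right (by omega)]
        exact mem_chordPairs.2 ⟨by omega, a, b, by rw [hBr, ha], by rw [hBr, hb], hr⟩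
      · obtain ⟨q, rfl⟩ : ∃ q, q' = q + (u.length + 1 + A.length + 1) :=
          ⟨q' - (u.length + 1 + A.length + 1), by omega⟩
        rw [hleft _ (by omega)] at ha
        rw [getElem?_split_right] at hb
        rw [if_neg (by omega), if_pos (by omega), min_eq_right (by omega),
          max_eq_left (by omega), Nat.add_sub_cancel]
        exact mem_chordPairs.2 ⟨by omega, b, a, by rw [hBl _ (by omega), hb], by rw [hBr, ha],
          hR _ _ hr⟩
    · obtain ⟨p, rfl⟩ : ∃ p, p' = p + (u.length + 1 + A.length + 1) :=
        ⟨p' - (u.length + 1 + A.length + 1), by omega⟩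
      obtain ⟨q, rfl⟩ : ∃ q, q' = q + (u.length + 1 + A.length + 1) :=
        ⟨q' - (u.length + 1 + A.length + 1), by omega⟩
      rw [getElem?_split_right] at ha hb
      rw [if_pos (by omega), if_pos (by omega), min_eq_left (by omega),
        max_eq_right (by omega), Nat.add_sub_cancel, Nat.add_sub_cancel]
      exact mem_chordPairs.2 ⟨by omega, a, b, by rw [hBl _ (by omega), ha],
        by rw [hBl _ (by omega), hb], hr⟩
  · intro h
    have hlt := mem_chordPairs_lt h
    obtain ⟨hpq, a, b, ha, hb, hr⟩ := mem_chordPairs.1 h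
    by_cases hq : q < B.length
    · rw [hBl _ (by omega)] at ha hb
      refine ⟨p + (u.length + 1 + A.length + 1), q + (u.length + 1 + A.length + 1),
        ⟨⟨by omega, mem_chordPairs.2 ⟨by omega, a, b, ?_, ?_, hr⟩⟩, by omega⟩, ?_, ?_⟩
      · rwa [getElem?_split_right]
      · rwa [getElem?_split_right]
      · rw [if_pos (by omega), if_pos (by omega)]; omega
      · rw [if_pos (by omega), if_pos (by omega)]; omega
    · obtain ⟨q, rfl⟩ : ∃ q', q = q' + B.length := ⟨q - B.length, by omega⟩
      rw [hBr] at hb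
      by_cases hp : p < B.length
      · rw [hBl _ (by omega)] at ha
        refine ⟨q, p + (u.length + 1 + A.length + 1),
          ⟨⟨by omega, mem_chordPairs.2 ⟨by omega, b, a, ?_, ?_, hR _ _ hr⟩⟩, by omega⟩, ?_, ?_⟩
        · rwa [hleft _ (by omega)]
        · rwa [getElem?_split_right]
        · rw [if_neg (by omega), if_pos (by omega)]; omega
        · rw [if_neg (by omega), if_pos (by omega)]; omega
      · obtain ⟨p, rfl⟩ : ∃ p', p = p' + B.length := ⟨p - B.length, by omega⟩
        rw [hBr] at ha
        refine ⟨p, q, ⟨⟨by omega, mem_chordPairs.2 ⟨by omega, a, b, ?_, ?_, hr⟩⟩, by omega⟩,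
          ?_, ?_⟩
        · rwa [hleft _ (by omega)]
        · rwa [hleft _ (by omega)]
        · rw [if_neg (by omega), if_neg (by omega)]; omega
        · rw [if_neg (by omega), if_neg (by omega)]; omega

end ChordLabelling

section Paths

variable {k s t}

theorem isPathFrom_append {v : I} {l l' : List (Arr E)} :
    IsPathFrom s t v (l ++ l') ↔ IsPathFrom s t v l ∧ IsPathFrom s t (pathTgt s t v l) l' := by
  induction l generalizing v with
  | nil => simp [IsPathFrom, pathTgt]
  | cons a l ih => simp [IsPathFrom, pathTgt, ih, and_assoc]

theorem pathTgt_append {v : I} {l l' : List (Arr E)} :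
    pathTgt s t v (l ++ l') = pathTgt s t (pathTgt s t v l) l' := by
  induction l generalizing v with
  | nil => rfl
  | cons a l ih => simp [pathTgt, ih]

theorem asrc_astar (a : Arr E) : asrc s t (astar a) = atgt s t a := by
  cases a <;> rfl

theorem astar_ne_self (a : Arr E) : astar a ≠ a := by
  cases a <;> simp [astar]

theorem omg_swap (a b : Arr E) : omg k b a = -omg k a b := by
  rcases a with a | a <;> rcases b with b | b <;> simp only [omg, neg_zero]
  · by_cases h : a = b
    · simp [h]
    · simp [h, Ne.symm h]
  · by_cases h : a = b
    · simp [h]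
    · simp [h, Ne.symm h]

end Paths

section Labelled

open scoped List

variable {k s t} {ι : Type*} {arr : ι → Arr E} {R : ι → ι → Prop}

/-- `R` matches labels whose arrows are mutually opposite. -/
structure IsMatching (arr : ι → Arr E) (R : ι → ι → Prop) : Prop where
  symm : ∀ i j, R i j → R j i
  unique : ∀ i j j', R i j → R i j' → j = j'
  star : ∀ i j, R i j → arr j = astar (arr i)

theorem IsMatching.ne (hR : IsMatching arr R) {i j : ι} (h : R i j) : i ≠ j := by
  rintro rfl
  exact astar_ne_self _ (hR.star _ _ h).symm

variable (s t arr R) in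
/-- A list of labels that spells a closed path at `v` and on which the chords given by `R`
do not cross. -/
structure IsDiagram (v : I) (L : List ι) : Prop where
  nodup : L.Nodup
  noncross : ∀ a b c d, [a, b, c, d] <+ L → R a c → R b d → False
  path : IsPathFrom s t v (L.map arr)
  closed : pathTgt s t v (L.map arr) = v

variable (k s t arr R) in
/-- The basis vector of the diagram spelled by a list of labels. -/
def diagram (v : I) (L : List ι) : ChOr k s t :=
  mkNCD k s t v (L.map arr) (chordPairs R L)

theorem IsMatching.isCut_chordPairs (hR : IsMatching arr R) {L : List ι} (hn : L.Nodup)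
    (hc : ∀ a b c d, [a, b, c, d] <+ L → R a c → R b d → False) :
    IsCut (L.map arr) (chordPairs R L) := by
  have inj : ∀ (p q : ℕ) (i : ι), L[p]? = some i → L[q]? = some i → p = q := by
    intro p q i hp hq
    exact (List.getElem?_inj (List.getElem?_eq_some_iff.1 hp).1 hn).1 (hp.trans hq.symm)
  refine ⟨?_, ?_, ?_⟩
  · rintro ⟨p, q⟩ h
    have hlt := mem_chordPairs_lt h
    obtain ⟨hpq, i, j, hi, hj, hr⟩ := mem_chordPairs.1 h
    refine ⟨hlt.1, by simpa using hlt.2, ?_⟩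
    simp only [List.getElem?_map, hi, hj, Option.map_some, hR.star _ _ hr]
    rcases arr i with e | e
    · exact ⟨e, Or.inl ⟨rfl, rfl⟩⟩
    · exact ⟨e, Or.inr ⟨rfl, rfl⟩⟩
  · rintro ⟨p, q⟩ h ⟨p', q'⟩ h' hne
    obtain ⟨hpq, i, j, hi, hj, hr⟩ := mem_chordPairs.1 h
    obtain ⟨hpq', i', j', hi', hj', hr'⟩ := mem_chordPairs.1 h'
    dsimp only
    refine ⟨?_, ?_, ?_, ?_⟩
    · rintro rfl
      obtain rfl := Option.some.inj (hi.symm.trans hi')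
      obtain rfl := hR.unique _ _ _ hr hr'
      exact hne (by rw [inj _ _ _ hj hj'])
    · rintro rfl
      obtain rfl := Option.some.inj (hi.symm.trans hj')
      obtain rfl := hR.unique _ _ _ hr (hR.symm _ _ hr')
      have := inj _ _ _ hj hi'
      omega
    · rintro rfl
      obtain rfl := Option.some.inj (hj.symm.trans hi')
      obtain rfl := hR.unique _ _ _ (hR.symm _ _ hr) hr'
      have := inj _ _ _ hi hj'
      omega
    · rintro rfl
      obtain rfl := Option.some.inj (hj.symm.trans hj')
      obtain rfl := hR.unique _ _ _ (hR.symm _ _ hr) (hR.symm _ _ hr')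
      exact hne (by rw [inj _ _ _ hi hi'])
  · rintro ⟨⟨p, q⟩, h, ⟨p', q'⟩, h', h1, h2, h3⟩
    obtain ⟨hpq, i, j, hi, hj, hr⟩ := mem_chordPairs.1 h
    obtain ⟨hpq', i', j', hi', hj', hr'⟩ := mem_chordPairs.1 h'
    dsimp only at h1 h2 h3
    obtain ⟨l1, rfl⟩ := List.getElem?_eq_some_iff.1 hi
    obtain ⟨l2, rfl⟩ := List.getElem?_eq_some_iff.1 hj
    obtain ⟨l3, rfl⟩ := List.getElem?_eq_some_iff.1 hi'
    obtain ⟨l4, rfl⟩ := List.getElem?_eq_some_iff.1 hj'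
    refine hc _ _ _ _ ?_ hr hr'
    have := List.map_getElem_sublist (l := L) (is := [⟨p, l1⟩, ⟨p', l3⟩, ⟨q, l2⟩, ⟨q', l4⟩])
      (by simp; omega)
    simpa using this

theorem IsDiagram.rotate_one (hR : IsMatching arr R) {v : I} {a : ι} {l : List ι}
    (h : IsDiagram s t arr R v (a :: l)) :
    IsDiagram s t arr R (atgt s t (arr a)) (l ++ [a]) := by
  have hp := h.path
  have hc := h.closed
  simp only [List.map_cons, IsPathFrom, pathTgt] at hp hc
  refine ⟨?_, ?_, ?_, ?_⟩
  · exact (List.isRotated_append (l := [a]) (l' := l)).nodup_iff.1 h.nodup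
  · intro w x y z hs hwy hxz
    rcases List.sublist_append_iff.1 hs with ⟨l₁, l₂, e, h₁, h₂⟩
    rcases List.sublist_singleton.1 h₂ with rfl | rfl
    · rw [List.append_nil] at e
      exact h.noncross _ _ _ _ ((e ▸ h₁).trans (List.sublist_cons_self _ _)) hwy hxz
    · have e' : [w, x, y] ++ [z] = l₁ ++ [a] := by simpa using e
      obtain ⟨rfl, e''⟩ := List.append_inj' e' rfl
      obtain rfl : z = a := by simpa using e''
      exact h.noncross z w x y (h₁.cons_cons z) (hR.symm _ _ hxz) hwy
  · simp only [List.map_append, List.map_cons, List.map_nil, isPathFrom_append, IsPathFrom]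
    exact ⟨hp.2, by rw [hc, hp.1], trivial⟩
  · simp [pathTgt_append, pathTgt]

theorem diagram_rotate_one (hR : IsMatching arr R) {v : I} {a : ι} {l : List ι}
    (h : IsDiagram s t arr R v (a :: l)) :
    diagram k s t arr R v (a :: l) = diagram k s t arr R (atgt s t (arr a)) (l ++ [a]) := by
  have h' := h.rotate_one hR
  have c := hR.isCut_chordPairs h.nodup h.noncross
  have c' := hR.isCut_chordPairs h'.nodup h'.noncross
  rw [diagram, diagram, mkNCD, mkNCD, dif_pos ⟨⟨h.path, h.closed⟩, c⟩,
    dif_pos ⟨⟨h'.path, h'.closed⟩, c'⟩]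
  congr 1
  exact Quot.sound ⟨arr a, l.map arr, rfl, by simp, rfl,
    by simpa using chordPairs_rotate hR.symm a l⟩

theorem IsDiagram.rotate (hR : IsMatching arr R) {v : I} {x y : List ι}
    (h : IsDiagram s t arr R v (x ++ y)) :
    IsDiagram s t arr R (pathTgt s t v (x.map arr)) (y ++ x) ∧
      diagram k s t arr R v (x ++ y)
        = diagram k s t arr R (pathTgt s t v (x.map arr)) (y ++ x) := by
  induction x generalizing v y with
  | nil => simpa [pathTgt] using h
  | cons a x ih =>
    rw [List.cons_append] at h
    have h1 := h.rotate_one hR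
    rw [List.append_assoc] at h1
    have := ih h1
    rw [List.cons_append, diagram_rotate_one hR h, List.append_assoc]
    simpa [pathTgt] using this

theorem IsDiagram.of_isRotated (hR : IsMatching arr R) {v : I} {L L' : List ι}
    (h : IsDiagram s t arr R v L) (hr : L ~r L') : ∃ v', IsDiagram s t arr R v' L' := by
  obtain ⟨n, hn, rfl⟩ := List.isRotated_iff_mod.1 hr
  rw [List.rotate_eq_drop_append_take hn]
  rw [← List.take_append_drop n L] at h
  exact ⟨_, (h.rotate (k := ℤ) hR).1⟩

theorem IsDiagram.cyclicArc (hR : IsMatching arr R) {v : I} {L : List ι} {i j : ι}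
    (h : IsDiagram s t arr R v L) (hij : R i j) (hi : i ∈ L) (hj : j ∈ L) :
    IsDiagram s t arr R (atgt s t (arr i)) (cyclicArc L i j) := by
  obtain ⟨w, hw⟩ := h.of_isRotated hR (isRotated_cyclicArc h.nodup (hR.ne hij) hi hj)
  have hsub : _root_.cyclicArc L i j <+
      i :: (_root_.cyclicArc L i j ++ j :: _root_.cyclicArc L j i) :=
    (List.sublist_append_left _ _).trans (List.sublist_cons_self _ _)
  have hp := hw.path
  simp only [List.map_cons, List.map_append, IsPathFrom, isPathFrom_append] at hp
  refine ⟨hsub.nodup hw.nodup, fun a b c d hs => hw.noncross a b c d (hs.trans hsub),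
    hp.2.1, ?_⟩
  rw [← hp.2.2.1, hR.star _ _ hij, asrc_astar]

variable (k s t arr R) in
open scoped Classical in
/-- The cobracket of a labelled diagram as a sum over directed chords. -/
def directedSum [Fintype ι] (L : List ι) : ChOr k s t ⊗[k] ChOr k s t :=
  ∑ i, ∑ j, if R i j ∧ i ∈ L ∧ j ∈ L then
    (-(omg k (arr i) (arr j))) •
      (diagram k s t arr R (atgt s t (arr i)) (cyclicArc L i j) ⊗ₜ[k]
        diagram k s t arr R (atgt s t (arr j)) (cyclicArc L j i))
    else 0

theorem directedSum_congr [Fintype ι] {L L' : List ι} (h : L ~r L') :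
    directedSum k s t arr R L = directedSum k s t arr R L' := by
  classical
  simp only [directedSum, cyclicArc_congr h]
  refine Finset.sum_congr rfl fun i _ => Finset.sum_congr rfl fun j _ => ?_
  exact if_congr (and_congr Iff.rfl (and_congr h.mem_iff h.mem_iff)) rfl rfl

theorem chOrTerm_eq_of_split (hR : IsMatching arr R) {u A B : List ι} {i j : ι}
    (hn : (u ++ i :: (A ++ j :: B)).Nodup) (hij : R i j) (x : NCDRaw s t)
    (hl : x.1.1.path.arrows = (u ++ i :: (A ++ j :: B)).map arr)
    (hH : x.1.2 = chordPairs R (u ++ i :: (A ++ j :: B))) :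
    chOrTerm k s t x (u.length, u.length + 1 + A.length) =
      (-(omg k (arr i) (arr j))) •
      (diagram k s t arr R (atgt s t (arr i)) (cyclicArc (u ++ i :: (A ++ j :: B)) i j) ⊗ₜ[k]
        diagram k s t arr R (atgt s t (arr j)) (cyclicArc (u ++ i :: (A ++ j :: B)) j i)) +
      (-(omg k (arr j) (arr i))) •
      (diagram k s t arr R (atgt s t (arr j)) (cyclicArc (u ++ i :: (A ++ j :: B)) j i) ⊗ₜ[k]
        diagram k s t arr R (atgt s t (arr i)) (cyclicArc (u ++ i :: (A ++ j :: B)) i j)) := by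
  have hr : (u ++ i :: (A ++ j :: B)) ~r (i :: (A ++ j :: (B ++ u))) := by
    simpa using (List.isRotated_append : (u ++ (i :: (A ++ j :: B))) ~r _)
  rw [cyclicArc_eq hn hr,
    cyclicArc_eq hn (hr.trans (List.isRotated_cons_append_cons i j A (B ++ u)))]
  have hcut := x.2
  rw [hH] at hcut
  have e1 : x.1.1.path.arrows[u.length]? = some (arr i) := by simp [hl]
  have e2 : x.1.1.path.arrows[u.length + 1 + A.length]? = some (arr j) := by
    rw [hl, List.getElem?_map, List.getElem?_append_right (by omega),
      show u.length + 1 + A.length - u.length = A.length + 1 by omega]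
    simp
  have e3 : (x.1.1.path.arrows.drop (u.length + 1)).take
      (u.length + 1 + A.length - u.length - 1) = A.map arr := by
    rw [hl, show u.length + 1 + A.length - u.length - 1 = A.length by omega, ← List.map_drop,
      ← List.map_take, show u ++ i :: (A ++ j :: B) = (u ++ [i]) ++ (A ++ j :: B) by simp,
      List.drop_left' (by simp), List.take_left' rfl]
  have e4 : x.1.1.path.arrows.drop (u.length + 1 + A.length + 1) ++
      x.1.1.path.arrows.take u.length = (B ++ u).map arr := by
    rw [hl, ← List.map_drop, ← List.map_take, ← List.map_append]
    congr 2
    · rw [show u ++ i :: (A ++ j :: B) = (u ++ i :: (A ++ [j])) ++ B by simp]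
      exact List.drop_left' (by simp; omega)
    · simp
  have e5 : x.1.1.path.arrows.length = (u ++ i :: (A ++ j :: B)).length := by
    rw [hl, List.length_map]
  simp only [chOrTerm, e1, e2, e3, e4, hH, insideCut_chordPairs]
  rw [e5, outsideCutC_chordPairs hR.symm u A B i j hij hcut, omg_swap (arr i) (arr j)]
  simp only [diagram]
  module

theorem sum_chOrTerm_eq [Fintype ι] (hR : IsMatching arr R) {L : List ι} (hn : L.Nodup)
    (x : NCDRaw s t) (hl : x.1.1.path.arrows = L.map arr) (hH : x.1.2 = chordPairs R L) :
    ∑ c ∈ x.1.2, chOrTerm k s t x c = directedSum k s t arr R L := by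
  classical
  set f : ι → ι → ChOr k s t ⊗[k] ChOr k s t := fun i j => (-(omg k (arr i) (arr j))) •
      (diagram k s t arr R (atgt s t (arr i)) (cyclicArc L i j) ⊗ₜ[k]
        diagram k s t arr R (atgt s t (arr j)) (cyclicArc L j i)) with hf
  have hsplit : directedSum k s t arr R L =
      ∑ i, ∑ j, if R i j ∧ [i, j] <+ L then f i j + f j i else 0 := by
    have h1 : directedSum k s t arr R L = (∑ i, ∑ j, if R i j ∧ [i, j] <+ L then f i j else 0) +
        ∑ i, ∑ j, if R i j ∧ [j, i] <+ L then f i j else 0 := by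
      simp only [directedSum, ← Finset.sum_add_distrib]
      refine Finset.sum_congr rfl fun i _ => Finset.sum_congr rfl fun j _ => ?_
      by_cases hr : R i j
      · by_cases ha : [i, j] <+ L
        · have hb := hn.not_pair_sublist_swap ha
          have hi : i ∈ L := ha.subset (by simp)
          have hj : j ∈ L := ha.subset (by simp)
          simp [hr, ha, hb, hi, hj, hf]
        · by_cases hb : [j, i] <+ L
          · have hi : i ∈ L := hb.subset (by simp)
            have hj : j ∈ L := hb.subset (by simp)
            simp [hr, ha, hb, hi, hj, hf]
          · have : ¬ (i ∈ L ∧ j ∈ L) := fun h =>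
              (List.pair_sublist_or (hR.ne hr) h.1 h.2).elim ha hb
            simp [ha, hb, this]
      · simp [hr]
    rw [h1, Finset.sum_comm (f := fun i j => if R i j ∧ [j, i] <+ L then f i j else 0)]
    simp only [← Finset.sum_add_distrib]
    refine Finset.sum_congr rfl fun i _ => Finset.sum_congr rfl fun j _ => ?_
    have : R j i ↔ R i j := ⟨hR.symm _ _, hR.symm _ _⟩
    rw [this]
    split_ifs <;> simp
  rw [hsplit, ← Fintype.sum_prod_type', ← Finset.sum_filter, hH]
  symm
  refine Finset.sum_bij (fun (p : ι × ι) _ => (L.idxOf p.1, L.idxOf p.2)) ?_ ?_ ?_ ?_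
  · rintro ⟨i, j⟩ h
    simp only [Finset.mem_filter, Finset.mem_univ, true_and] at h
    obtain ⟨hr, h⟩ := h
    have hi : i ∈ L := h.subset (by simp)
    have hj : j ∈ L := h.subset (by simp)
    refine mem_chordPairs.2 ⟨?_, i, j, List.getElem?_idxOf hi, List.getElem?_idxOf hj, hr⟩
    obtain ⟨u, A, B, rfl⟩ := List.pair_sublist_iff.1 h
    have := hn.idxOf_split
    dsimp only
    omega
  · rintro ⟨i, j⟩ h ⟨i', j'⟩ h' e
    simp only [Finset.mem_filter, Finset.mem_univ, true_and] at h h'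
    simp only [Prod.mk.injEq] at e ⊢
    exact ⟨(List.idxOf_inj (h.2.subset (by simp))).1 e.1,
      (List.idxOf_inj (h.2.subset (by simp))).1 e.2⟩
  · rintro ⟨p, q⟩ h
    obtain ⟨hpq, i, j, hi, hj, hr⟩ := mem_chordPairs.1 h
    obtain ⟨u, A, B, rfl, rfl, rfl⟩ := List.exists_split_of_getElem? hpq hi hj
    refine ⟨(i, j), ?_, by rw [hn.idxOf_split.1, hn.idxOf_split.2]⟩
    simp only [Finset.mem_filter, Finset.mem_univ, true_and]
    exact ⟨hr, List.pair_sublist_iff.2 ⟨u, A, B, rfl⟩⟩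
  · rintro ⟨i, j⟩ h
    simp only [Finset.mem_filter, Finset.mem_univ, true_and] at h
    obtain ⟨u, A, B, rfl⟩ := List.pair_sublist_iff.1 h.2
    dsimp only
    rw [hn.idxOf_split.1, hn.idxOf_split.2, chOrTerm_eq_of_split hR hn h.1 x hl hH]

end Labelled

section Cobracket

open scoped List

variable {k s t}

theorem NCDRaw.exists_labelling (x : NCDRaw s t) :
    ∃ (n : ℕ) (arr : Fin n → Arr E) (R : Fin n → Fin n → Prop) (L : List (Fin n)),
      IsMatching arr R ∧ IsDiagram s t arr R x.1.1.path.src L ∧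
        x.1.1.path.arrows = L.map arr ∧ x.1.2 = chordPairs R L := by
  obtain ⟨⟨⟨⟨v, l, hp⟩, hc⟩, H⟩, hcut⟩ := x
  dsimp only at hcut hc ⊢
  set R : Fin l.length → Fin l.length → Prop :=
    fun i j => ((i : ℕ), (j : ℕ)) ∈ H ∨ ((j : ℕ), (i : ℕ)) ∈ H with hRdef
  have hl : (List.finRange l.length).map (fun i => l[i]) = l := by
    simp
  have hget : ∀ (p : ℕ) (i : Fin l.length),
      (List.finRange l.length)[p]? = some i ↔ (i : ℕ) = p := by
    intro p i
    rw [List.getElem?_eq_some_iff]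
    constructor
    · rintro ⟨h, rfl⟩
      simp
    · rintro rfl
      exact ⟨by simp, by simp⟩
  refine ⟨l.length, fun i => l[i], R, List.finRange l.length, ⟨?_, ?_, ?_⟩,
    ⟨List.nodup_finRange _, ?_, by simpa only [hl] using hp, by simpa only [hl] using hc⟩,
    hl.symm, ?_⟩
  · exact fun i j h => h.symm
  · intro i j j' h h'
    by_contra hne
    have hv : (j : ℕ) ≠ j' := fun e => hne (Fin.ext e)
    rcases h with h | h <;> rcases h' with h' | h'
    · exact (hcut.2.1 _ h _ h' (by simp [hv])).1 rfl
    · by_cases e : ((i : ℕ), (j : ℕ)) = ((j' : ℕ), (i : ℕ))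
      · simp only [Prod.mk.injEq] at e
        omega
      · exact (hcut.2.1 _ h _ h' e).2.1 rfl
    · by_cases e : ((j : ℕ), (i : ℕ)) = ((i : ℕ), (j' : ℕ))
      · simp only [Prod.mk.injEq] at e
        omega
      · exact (hcut.2.1 _ h _ h' e).2.2.1 rfl
    · exact (hcut.2.1 _ h _ h' (by simp [hv])).2.2.2 rfl
  · have key : ∀ i j : Fin l.length, ((i : ℕ), (j : ℕ)) ∈ H →
        l[j] = astar l[i] ∧ l[i] = astar l[j] := by
      intro i j h
      obtain ⟨-, -, e, h | h⟩ := hcut.1 _ h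
      · obtain ⟨h1, h2⟩ := h
        simp only [Fin.is_lt, List.getElem?_eq_getElem, Option.some.injEq] at h1 h2
        simp [h1, h2, astar]
      · obtain ⟨h1, h2⟩ := h
        simp only [Fin.is_lt, List.getElem?_eq_getElem, Option.some.injEq] at h1 h2
        simp [h1, h2, astar]
    rintro i j (h | h)
    · exact (key i j h).1
    · exact (key j i h).2
  · intro a b c d hs hac hbd
    have hpw : [a, b, c, d].Pairwise (· < ·) :=
      (List.pairwise_lt_finRange l.length).sublist hs
    simp only [List.pairwise_cons, List.mem_cons, forall_eq_or_imp, List.not_mem_nil,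
      Fin.lt_def] at hpw
    obtain ⟨⟨h1, h2, h3, -⟩, ⟨h4, h5, -⟩, ⟨h6, -⟩, -⟩ := hpw
    have hac' : ((a : ℕ), (c : ℕ)) ∈ H := hac.resolve_right fun h => by
      have := (hcut.1 _ h).1
      dsimp only at this
      omega
    have hbd' : ((b : ℕ), (d : ℕ)) ∈ H := hbd.resolve_right fun h => by
      have := (hcut.1 _ h).1
      dsimp only at this
      omega
    exact hcut.2.2 ⟨_, hac', _, hbd', h1, h4, h6⟩
  · ext ⟨p, q⟩
    simp only [mem_chordPairs, hget]
    constructor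
    · intro h
      have h1 := (hcut.1 _ h).1
      have h2 := (hcut.1 _ h).2.1
      dsimp only at h1 h2
      exact ⟨h1, ⟨p, by omega⟩, ⟨q, h2⟩, rfl, rfl, Or.inl h⟩
    · rintro ⟨hpq, i, j, rfl, rfl, h | h⟩
      · exact h
      · have := (hcut.1 _ h).1
        dsimp only at this
        omega

theorem sum_chOrTerm_rotate {x y : NCDRaw s t} (h : RotRelC s t x y) :
    ∑ c ∈ x.1.2, chOrTerm k s t x c = ∑ c ∈ y.1.2, chOrTerm k s t y c := by
  obtain ⟨n, arr, R, L, hR, hd, hl, hH⟩ := x.exists_labelling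
  obtain ⟨a, l, hx, hy, -, hyH⟩ := h
  cases L with
  | nil => simp [hx] at hl
  | cons i L =>
    rw [hx, List.map_cons, List.cons.injEq] at hl
    obtain ⟨rfl, rfl⟩ := hl
    rw [sum_chOrTerm_eq hR hd.nodup x (by rw [hx, List.map_cons]) hH,
      sum_chOrTerm_eq hR (hd.rotate_one hR).nodup y (by rw [hy]; simp)
        (by rw [chordPairs_rotate hR.symm, ← hH, hyH, List.length_map])]
    exact directedSum_congr (List.isRotated_append (l := [i]))

variable (k) in
/-- The basis vector of the necklace chord diagram represented by `x`. -/
def NCDRaw.basisVector (x : NCDRaw s t) : ChOr k s t :=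
  Finsupp.single (Quot.mk (RotRelC s t) x : NCD s t) 1

theorem ChOr.hom_ext {M : Type*} [AddCommMonoid M] [Module k M] {f g : ChOr k s t →ₗ[k] M}
    (h : ∀ x : NCDRaw s t, f (x.basisVector k) = g (x.basisVector k)) : f = g := by
  refine Finsupp.lhom_ext' fun q => LinearMap.ext_ring ?_
  obtain ⟨x, rfl⟩ := Quot.exists_rep q
  exact h x

theorem deltaChOr_basisVector (x : NCDRaw s t) :
    deltaChOr k s t (x.basisVector k) = ∑ c ∈ x.1.2, chOrTerm k s t x c := by
  have key : ∀ q : NCD s t, ∑ c ∈ q.out.1.2, chOrTerm k s t q.out c =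
      Quot.lift (fun x : NCDRaw s t => ∑ c ∈ x.1.2, chOrTerm k s t x c)
        (fun _ _ => sum_chOrTerm_rotate) q := by
    intro q
    conv_rhs => rw [← Quot.out_eq q]
  rw [deltaChOr, NCDRaw.basisVector, Finsupp.lift_apply]
  refine (Finsupp.sum_single_index ?_).trans ((one_smul k _).trans (key _))
  exact zero_smul k _

variable {ι : Type*} {arr : ι → Arr E} {R : ι → ι → Prop}

theorem diagram_eq_basisVector (x : NCDRaw s t) {v : I} {L : List ι} (hv : x.1.1.path.src = v)
    (hl : x.1.1.path.arrows = L.map arr) (hH : x.1.2 = chordPairs R L) :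
    diagram k s t arr R v L = x.basisVector k := by
  subst hv
  rw [diagram, ← hl, ← hH, mkNCD, dif_pos ⟨⟨x.1.1.path.valid, x.1.1.closed⟩, x.2⟩]
  rfl

theorem deltaChOr_diagram [Fintype ι] (hR : IsMatching arr R) {v : I} {L : List ι}
    (h : IsDiagram s t arr R v L) :
    deltaChOr k s t (diagram k s t arr R v L) = directedSum k s t arr R L := by
  have hcut := hR.isCut_chordPairs h.nodup h.noncross
  let x : NCDRaw s t := ⟨(⟨⟨v, L.map arr, h.path⟩, h.closed⟩, chordPairs R L), hcut⟩
  rw [diagram_eq_basisVector x rfl rfl rfl, deltaChOr_basisVector]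
  exact sum_chOrTerm_eq hR h.nodup x rfl rfl

theorem tau2_chOrTerm_add (x : NCDRaw s t) (c : ℕ × ℕ) :
    tau2 k (ChOr k s t) (chOrTerm k s t x c) + chOrTerm k s t x c = 0 := by
  unfold chOrTerm
  dsimp only
  split
  · simp only [tau2, map_smul, map_sub, LinearEquiv.coe_coe, TensorProduct.comm_tmul]
    module
  · rw [zero_smul, map_zero, add_zero]

theorem tau2_comp_eq_neg {g : Type*} [AddCommGroup g] [Module k g] {δ : g →ₗ[k] g ⊗[k] g}
    (h : tau2 k g ∘ₗ δ + δ = 0) : tau2 k g ∘ₗ δ = -δ :=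
  eq_neg_of_add_eq_zero_left h

variable (k s t arr R) in
/-- The summand of `(δ ⊗ Id) ∘ δ` for the directed chord `(i, j)` followed by `(m, n)`. -/
def iterTerm (L : List ι) (i j m n : ι) : ChOr k s t ⊗[k] (ChOr k s t ⊗[k] ChOr k s t) :=
  (omg k (arr i) (arr j) * omg k (arr m) (arr n)) •
    (diagram k s t arr R (atgt s t (arr m)) (cyclicArc (cyclicArc L i j) m n) ⊗ₜ[k]
      (diagram k s t arr R (atgt s t (arr n)) (cyclicArc (cyclicArc L i j) n m) ⊗ₜ[k]
        diagram k s t arr R (atgt s t (arr j)) (cyclicArc L j i)))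

open scoped Classical in
theorem leftIter_diagram [Fintype ι] (hR : IsMatching arr R) {v : I} {L : List ι}
    (h : IsDiagram s t arr R v L) :
    leftIter (deltaChOr k s t) (diagram k s t arr R v L) =
      ∑ i, ∑ j, ∑ m, ∑ n, if (R i j ∧ i ∈ L ∧ j ∈ L) ∧ R m n ∧ m ∈ cyclicArc L i j ∧
        n ∈ cyclicArc L i j then iterTerm k s t arr R L i j m n else 0 := by
  simp only [leftIter, LinearMap.comp_apply, deltaChOr_diagram hR h, directedSum, map_sum]
  refine Finset.sum_congr rfl fun i _ => Finset.sum_congr rfl fun j _ => ?_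
  by_cases hc : R i j ∧ i ∈ L ∧ j ∈ L
  · simp only [hc, and_self, if_true, true_and, map_smul, LinearMap.rTensor_tmul,
      deltaChOr_diagram hR (h.cyclicArc hR hc.1 hc.2.1 hc.2.2), directedSum,
      TensorProduct.sum_tmul, map_sum, Finset.smul_sum]
    refine Finset.sum_congr rfl fun m _ => Finset.sum_congr rfl fun n _ => ?_
    split_ifs
    · simp only [map_smul, LinearEquiv.coe_coe,
        TensorProduct.assoc_tmul, smul_smul, iterTerm, neg_mul_neg, ← TensorProduct.smul_tmul']
    · simp
  · simp only [hc, if_false, false_and, map_zero, Finset.sum_const_zero]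

theorem exists_isRotated_of_nested {L : List ι} (hn : L.Nodup) {i j m n : ι} (hij : i ≠ j)
    (hi : i ∈ L) (hj : j ∈ L) (h : [m, n] <+ cyclicArc L i j) :
    ∃ M B M' A, L ~r (i :: ((M ++ m :: (B ++ n :: M')) ++ j :: A)) := by
  obtain ⟨M, B, M', e⟩ := List.pair_sublist_iff.1 h
  exact ⟨M, B, M', cyclicArc L j i, e ▸ isRotated_cyclicArc hn hij hi hj⟩

theorem iterTerm_eq {L M B M' A : List ι} {i j m n : ι} (hn : L.Nodup)
    (h : L ~r (i :: ((M ++ m :: (B ++ n :: M')) ++ j :: A))) :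
    iterTerm k s t arr R L i j m n = (omg k (arr i) (arr j) * omg k (arr m) (arr n)) •
      (diagram k s t arr R (atgt s t (arr m)) B ⊗ₜ[k]
        (diagram k s t arr R (atgt s t (arr n)) (M' ++ M) ⊗ₜ[k]
          diagram k s t arr R (atgt s t (arr j)) A)) ∧
    iterTerm k s t arr R L i j n m = (omg k (arr i) (arr j) * omg k (arr n) (arr m)) •
      (diagram k s t arr R (atgt s t (arr n)) (M' ++ M) ⊗ₜ[k]
        (diagram k s t arr R (atgt s t (arr m)) B ⊗ₜ[k]
          diagram k s t arr R (atgt s t (arr j)) A)) := by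
  have h1 : cyclicArc L i j = M ++ m :: (B ++ n :: M') := cyclicArc_eq hn h
  have h2 : cyclicArc L j i = A :=
    cyclicArc_eq hn (h.trans (List.isRotated_cons_append_cons i j _ _))
  have hn' := h.nodup_iff.1 hn
  have hn1 : (M ++ m :: (B ++ n :: M')).Nodup :=
    (List.nodup_append.1 (List.nodup_cons.1 hn').2).1
  have hr : (M ++ m :: (B ++ n :: M')) ~r (m :: (B ++ n :: (M' ++ M))) := by
    simpa using (List.isRotated_append : (M ++ (m :: (B ++ n :: M'))) ~r _)
  have h3 : cyclicArc (M ++ m :: (B ++ n :: M')) m n = B := cyclicArc_eq hn1 hr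
  have h4 : cyclicArc (M ++ m :: (B ++ n :: M')) n m = M' ++ M :=
    cyclicArc_eq hn1 (hr.trans (List.isRotated_cons_append_cons _ _ _ _))
  simp only [iterTerm, h1, h2, h3, h4, and_self]

theorem isRotated_nested_swap (M B M' A : List ι) (i j m n : ι) :
    (i :: ((M ++ m :: (B ++ n :: M')) ++ j :: A)) ~r
      (n :: ((M' ++ j :: (A ++ i :: M)) ++ m :: B)) := by
  simpa using (List.isRotated_append : ((i :: (M ++ m :: B)) ++ (n :: (M' ++ j :: A))) ~r _)

theorem diagram_arc_swap (hR : IsMatching arr R) {v : I} {L M B M' A : List ι} {i j m n : ι}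
    (hd : IsDiagram s t arr R v L) (hij : R i j) (hmn : R m n)
    (h : L ~r (i :: ((M ++ m :: (B ++ n :: M')) ++ j :: A))) :
    diagram k s t arr R (atgt s t (arr i)) (M ++ M') =
      diagram k s t arr R (atgt s t (arr n)) (M' ++ M) := by
  have hnd := hd.nodup
  have hi : i ∈ L := h.mem_iff.2 (by simp)
  have hj : j ∈ L := h.mem_iff.2 (by simp)
  have hd1 := hd.cyclicArc hR hij hi hj
  rw [cyclicArc_eq hnd h] at hd1
  have hr : (M ++ m :: (B ++ n :: M')) ~r (n :: ((M' ++ M) ++ m :: B)) := by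
    simpa using (List.isRotated_append : ((M ++ m :: B) ++ (n :: M')) ~r _)
  have hd2 := hd1.cyclicArc hR (hR.symm _ _ hmn) (by simp) (by simp)
  rw [cyclicArc_eq hd1.nodup hr] at hd2
  rw [(hd2.rotate (k := k) hR).2]
  have hp := hd1.path
  have hc := hd1.closed
  simp only [List.map_cons, List.map_append, IsPathFrom, isPathFrom_append, pathTgt_append,
    pathTgt] at hp hc
  rw [hc]

variable (k s t) in
/-- The sum of the cyclic permutations of a triple tensor. -/
def cyclicSum : ChOr k s t ⊗[k] (ChOr k s t ⊗[k] ChOr k s t) →ₗ[k]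
    ChOr k s t ⊗[k] (ChOr k s t ⊗[k] ChOr k s t) :=
  LinearMap.id + tau123 k (ChOr k s t) + tau132 k (ChOr k s t)

theorem cyclic_iterTerm (hR : IsMatching arr R) {v : I} {L M B M' A : List ι} {i j m n : ι}
    (hd : IsDiagram s t arr R v L) (hij : R i j) (hmn : R m n)
    (h : L ~r (i :: ((M ++ m :: (B ++ n :: M')) ++ j :: A))) :
    cyclicSum k s t (iterTerm k s t arr R L i j m n + iterTerm k s t arr R L n m i j) = 0 := by
  rw [(iterTerm_eq hd.nodup h).1,
    (iterTerm_eq hd.nodup (h.trans (isRotated_nested_swap _ _ _ _ _ _ _ _))).2,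
    diagram_arc_swap hR hd hij hmn h, omg_swap (arr m) (arr n)]
  simp only [cyclicSum, tau123, tau132, LinearMap.add_apply, LinearMap.id_apply, LinearMap.comp_apply,
    map_add, map_smul, LinearEquiv.coe_coe, TensorProduct.comm_tmul, TensorProduct.assoc_tmul]
  module

theorem leftIter_diagram_cyclic [Fintype ι] (hR : IsMatching arr R) {v : I} {L : List ι}
    (h : IsDiagram s t arr R v L) :
    cyclicSum k s t (leftIter (deltaChOr k s t) (diagram k s t arr R v L)) = 0 := by
  classical
  set P : ι → ι → ι → ι → Prop := fun i j m n =>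
    (R i j ∧ i ∈ L ∧ j ∈ L) ∧ R m n ∧ [m, n] <+ cyclicArc L i j with hP
  have hPex : ∀ i j m n, P i j m n →
      ∃ M B M' A, L ~r (i :: ((M ++ m :: (B ++ n :: M')) ++ j :: A)) :=
    fun i j m n hp =>
      exists_isRotated_of_nested h.nodup (hR.ne hp.1.1) hp.1.2.1 hp.1.2.2 hp.2.2
  have hPswap : ∀ i j m n, P i j m n → P n m j i := by
    intro i j m n hp
    obtain ⟨M, B, M', A, hr⟩ := hPex i j m n hp
    refine ⟨⟨hR.symm _ _ hp.2.1, hr.mem_iff.2 (by simp), hr.mem_iff.2 (by simp)⟩,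
      hR.symm _ _ hp.1.1, ?_⟩
    rw [cyclicArc_eq h.nodup (hr.trans (isRotated_nested_swap _ _ _ _ _ _ _ _))]
    exact List.pair_sublist_iff.2 ⟨_, _, _, rfl⟩
  set T := iterTerm k s t arr R L with hT
  have hsum : leftIter (deltaChOr k s t) (diagram k s t arr R v L) =
      ∑ i, ∑ j, ∑ m, ∑ n, if P i j m n then T i j m n + T n m i j else 0 := by
    have h1 : leftIter (deltaChOr k s t) (diagram k s t arr R v L) =
        (∑ i, ∑ j, ∑ m, ∑ n, if P i j m n then T i j m n else 0) +
          ∑ i, ∑ j, ∑ m, ∑ n, if P i j n m then T i j m n else 0 := by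
      rw [leftIter_diagram hR h]
      simp only [← Finset.sum_add_distrib]
      refine Finset.sum_congr rfl fun i _ => Finset.sum_congr rfl fun j _ =>
        Finset.sum_congr rfl fun m _ => Finset.sum_congr rfl fun n _ => ?_
      by_cases hij : R i j ∧ i ∈ L ∧ j ∈ L
      · by_cases hmn : R m n
        · have hnm := hR.symm _ _ hmn
          have hnd := (h.cyclicArc hR hij.1 hij.2.1 hij.2.2).nodup
          by_cases ha : [m, n] <+ cyclicArc L i j
          · have hb := hnd.not_pair_sublist_swap ha
            have hm : m ∈ cyclicArc L i j := ha.subset (by simp)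
            have hn : n ∈ cyclicArc L i j := ha.subset (by simp)
            simp [hP, hT, hij, hmn, hnm, ha, hb, hm, hn]
          · by_cases hb : [n, m] <+ cyclicArc L i j
            · have hm : m ∈ cyclicArc L i j := hb.subset (by simp)
              have hn : n ∈ cyclicArc L i j := hb.subset (by simp)
              simp [hP, hT, hij, hmn, hnm, ha, hb, hm, hn]
            · have : ¬ (m ∈ cyclicArc L i j ∧ n ∈ cyclicArc L i j) := fun h =>
                (List.pair_sublist_or (hR.ne hmn) h.1 h.2).elim ha hb
              simp [hP, ha, hb, this]
        · have hnm : ¬ R n m := fun h => hmn (hR.symm _ _ h)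
          simp [hP, hmn, hnm]
      · simp [hP, hij]
    have h2 : (∑ i, ∑ j, ∑ m, ∑ n, if P i j n m then T i j m n else 0) =
        ∑ i, ∑ j, ∑ m, ∑ n, if P i j m n then T n m i j else 0 := by
      have e : ∀ F : ι → ι → ι → ι → ChOr k s t ⊗[k] (ChOr k s t ⊗[k] ChOr k s t),
          ∑ i, ∑ j, ∑ m, ∑ n, F i j m n =
            ∑ p : ι × ι × ι × ι, F p.1 p.2.1 p.2.2.1 p.2.2.2 := by
        simp [Fintype.sum_prod_type]
      rw [e, e]
      refine Fintype.sum_equiv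
        ⟨fun p => (p.2.2.1, p.2.2.2, p.2.1, p.1), fun p => (p.2.2.2, p.2.2.1, p.1, p.2.1),
          fun _ => rfl, fun _ => rfl⟩ _ _ fun p => ?_
      exact if_congr ⟨hPswap _ _ _ _, hPswap _ _ _ _⟩ rfl rfl
    rw [h1, h2]
    simp only [← Finset.sum_add_distrib]
    refine Finset.sum_congr rfl fun i _ => Finset.sum_congr rfl fun j _ =>
      Finset.sum_congr rfl fun m _ => Finset.sum_congr rfl fun n _ => ?_
    split_ifs <;> simp
  rw [hsum]
  simp only [map_sum]
  refine Finset.sum_eq_zero fun i _ => Finset.sum_eq_zero fun j _ =>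
    Finset.sum_eq_zero fun m _ => Finset.sum_eq_zero fun n _ => ?_
  split_ifs with hp
  · obtain ⟨M, B, M', A, hr⟩ := hPex i j m n hp
    exact cyclic_iterTerm hR h hp.1.1 hp.2.1 hr
  · exact map_zero _

end Cobracket

/-- `(Ch_or, δ_or)` is a Lie coalgebra. -/
theorem deltaChOr_isLieCobracket : IsLieCobracket (deltaChOr k s t) := by
  refine ⟨tau2_comp_eq_neg (ChOr.hom_ext fun x => ?_), ChOr.hom_ext fun x => ?_⟩
  · simp only [LinearMap.add_apply, LinearMap.comp_apply, LinearMap.zero_apply,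
      deltaChOr_basisVector, map_sum, ← Finset.sum_add_distrib, tau2_chOrTerm_add,
      Finset.sum_const_zero]
  · obtain ⟨n, arr, R, L, hR, hd, hl, hH⟩ := x.exists_labelling
    rw [← diagram_eq_basisVector x rfl hl hH]
    exact leftIter_diagram_cyclic hR hd

end
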